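/- arXiv:2110.10078 — 5 statements merged into one kernel-verified Lean document; each statement's English description precedes it below -/
import Mathlib

section
/- For each fixed integer k ≥ 2, the equation (k-1)^k τ^{k+1} - (k-1) 2^{k-1} k^k τ² + (2k)^{k+1} = 0 has exactly two positive real solutions: τ₁(k) = 2k/(k-1), and a second solution τ₂(k) which satisfies τ₂(k) > 2(k+1)/(k-1). -/
/-!
With `τ = 2k/(k-1) * s` the left-hand side becomes `(2k)^(k+1)/(k-1) * f s`, where
`f s = s^(k+1) - k s² + (k-1)` (`lhs_rescale`), and `2(k+1)/(k-1)` corresponds to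
`s = (k+1)/k`. The root `s = 1` splits off:
`f s = (s-1) (s² (1 + s + ⋯ + s^(k-2)) - (k-1)(s+1))`. After division by `s²` the second factor
is a nondecreasing function minus `(k-1)(1/s + 1/s²)`, hence strictly increasing, so it has at
most one positive root (`root_unique`).

That root exists and exceeds `(k+1)/k` by the intermediate value theorem, because `f 2 ≥ 0`
(`f_two_nonneg`) while `f ((k+1)/k) = (1+1/k)^(k+1) - 3 - 1/k < 0` (`f_neg`). The last inequality
follows from `(1+1/k)^k < e < 3 - 2/(k+1)` for `k ≥ 7` and is numerical for smaller `k`.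
-/

/-- The rescaled polynomial, obtained from the left-hand side at `τ = 2k/(k-1) * s`. -/
noncomputable def f (k : ℕ) (s : ℝ) : ℝ := s ^ (k + 1) - k * s ^ 2 + (k - 1)

lemma lhs_rescale (k : ℕ) (hk : 2 ≤ k) (s : ℝ) :
    ((k : ℝ) - 1) ^ k * (2 * (k : ℝ) / ((k : ℝ) - 1) * s) ^ (k + 1) -
      ((k : ℝ) - 1) * 2 ^ (k - 1) * (k : ℝ) ^ k * (2 * (k : ℝ) / ((k : ℝ) - 1) * s) ^ 2 +
        (2 * (k : ℝ)) ^ (k + 1) = (2 * (k : ℝ)) ^ (k + 1) / ((k : ℝ) - 1) * f k s := by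
  have h2 : (2 : ℝ) ≤ k := by exact_mod_cast hk
  have h1 : (k : ℝ) - 1 ≠ 0 := by linarith
  have e2 : (2 : ℝ) ^ (k + 1) = 4 * 2 ^ (k - 1) := by
    obtain ⟨n, rfl⟩ : ∃ n, k = n + 1 := ⟨k - 1, by omega⟩
    simp only [Nat.add_sub_cancel]; ring
  have e1 : ((k : ℝ) - 1) ^ k * (2 * (k : ℝ) / ((k : ℝ) - 1) * s) ^ (k + 1)
      = (2 * (k : ℝ)) ^ (k + 1) / ((k : ℝ) - 1) * s ^ (k + 1) := by
    rw [mul_pow, div_pow, pow_succ ((k : ℝ) - 1) k]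
    have := pow_ne_zero k h1
    field_simp
  rw [e1, f, mul_pow 2 (k : ℝ) (k + 1), e2, pow_succ (k : ℝ) k]
  field_simp
  ring

lemma f_factor (n : ℕ) (s : ℝ) :
    f (n + 2) s =
      (s - 1) * (s ^ 2 * ∑ i ∈ Finset.range (n + 1), s ^ i - (n + 1) * (s + 1)) := by
  have h := geom_sum_mul s (n + 1)
  have e : (s - 1) * (s ^ 2 * ∑ i ∈ Finset.range (n + 1), s ^ i - (n + 1) * (s + 1)) =
      s ^ 2 * ((∑ i ∈ Finset.range (n + 1), s ^ i) * (s - 1)) - (n + 1) * (s ^ 2 - 1) := by ring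
  rw [e, h, f]
  push_cast
  ring

lemma cofactor_root_not_lt (n : ℕ) {a b : ℝ} (ha : 0 < a) (hab : a < b)
    (h1 : a ^ 2 * ∑ i ∈ Finset.range (n + 1), a ^ i - (n + 1) * (a + 1) = 0)
    (h2 : b ^ 2 * ∑ i ∈ Finset.range (n + 1), b ^ i - (n + 1) * (b + 1) = 0) : False := by
  have hG : ∑ i ∈ Finset.range (n + 1), a ^ i ≤ ∑ i ∈ Finset.range (n + 1), b ^ i :=
    Finset.sum_le_sum fun i _ => pow_le_pow_left₀ ha.le hab.le i
  have hb : 0 < b := ha.trans hab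
  have h3 := mul_le_mul_of_nonneg_left hG (by positivity : 0 ≤ a ^ 2 * b ^ 2)
  have h4 : (0 : ℝ) < (n + 1) * ((b - a) * (a * b + a + b)) :=
    mul_pos (by positivity) (mul_pos (by linarith) (by positivity))
  refine lt_irrefl (0 : ℝ) ?_
  linear_combination h3 + h4 - b ^ 2 * h1 + a ^ 2 * h2

lemma root_unique (k : ℕ) (hk : 2 ≤ k) {a b : ℝ} (ha : 0 < a) (hb : 0 < b) (ha1 : a ≠ 1)
    (hb1 : b ≠ 1) (h1 : f k a = 0) (h2 : f k b = 0) : a = b := by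
  obtain ⟨n, rfl⟩ : ∃ n, k = n + 2 := ⟨k - 2, by omega⟩
  rw [f_factor] at h1 h2
  have h1' := (mul_eq_zero.1 h1).resolve_left (sub_ne_zero.2 ha1)
  have h2' := (mul_eq_zero.1 h2).resolve_left (sub_ne_zero.2 hb1)
  rcases lt_trichotomy a b with h | h | h
  · exact (cofactor_root_not_lt n ha h h1' h2').elim
  · exact h
  · exact (cofactor_root_not_lt n hb h h2' h1').elim

lemma f_two_nonneg (k : ℕ) (hk : 2 ≤ k) : 0 ≤ f k 2 := by
  have h : (3 * k + 1 : ℝ) ≤ 2 ^ (k + 1) := by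
    induction k, hk using Nat.le_induction with
    | base => norm_num
    | succ m hm ih =>
      have : (2 : ℝ) ≤ m := by exact_mod_cast hm
      rw [pow_succ]
      push_cast
      linarith
  unfold f
  linarith

lemma one_add_inv_pow_lt (k : ℕ) (hk : 2 ≤ k) :
    (1 + 1 / (k : ℝ)) ^ k < 3 - 2 / ((k : ℝ) + 1) := by
  rcases lt_or_ge k 7 with h | h
  · interval_cases k <;> norm_num
  · have h7 : (7 : ℝ) ≤ k := by exact_mod_cast h
    have hexp : (1 + 1 / (k : ℝ)) ^ k ≤ Real.exp 1 := by
      calc (1 + 1 / (k : ℝ)) ^ k ≤ (Real.exp (1 / k)) ^ k := by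
            apply pow_le_pow_left₀ (by positivity)
            linarith [Real.add_one_le_exp (1 / (k : ℝ))]
        _ = Real.exp 1 := by
            rw [← Real.exp_nat_mul]
            congr 1
            field_simp
    have hfrac : 2 / ((k : ℝ) + 1) ≤ 1 / 4 := by
      rw [div_le_div_iff₀ (by positivity) (by norm_num)]
      linarith
    linarith [Real.exp_one_lt_d9]

lemma f_neg (k : ℕ) (hk : 2 ≤ k) : f k (1 + 1 / (k : ℝ)) < 0 := by
  have h2 : (2 : ℝ) ≤ k := by exact_mod_cast hk
  have h0 : (0 : ℝ) < k := by linarith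
  have h := mul_lt_mul_of_pos_right (one_add_inv_pow_lt k hk)
    (by positivity : 0 < 1 + 1 / (k : ℝ))
  have e : (3 - 2 / ((k : ℝ) + 1)) * (1 + 1 / (k : ℝ)) = 3 + 1 / k := by
    field_simp
    ring
  have e' : (k : ℝ) * (1 + 1 / (k : ℝ)) ^ 2 = k + 2 + 1 / k := by
    field_simp
    ring
  rw [f, pow_succ, e']
  linarith

/-- for `k ≥ 2`, the equation
`(k-1)^k τ^{k+1} - (k-1) 2^{k-1} k^k τ² + (2k)^{k+1} = 0` has exactly two positive real
solutions: `τ₁(k) = 2k/(k-1)` and a second one `τ₂(k) > 2(k+1)/(k-1)`. -/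
theorem stmt5 (k : ℕ) (hk : 2 ≤ k) :
    ∃ τ₂ : ℝ, 2 * ((k : ℝ) + 1) / ((k : ℝ) - 1) < τ₂ ∧
      2 * (k : ℝ) / ((k : ℝ) - 1) ≠ τ₂ ∧
      {τ : ℝ | 0 < τ ∧
          ((k : ℝ) - 1) ^ k * τ ^ (k + 1) -
              ((k : ℝ) - 1) * 2 ^ (k - 1) * (k : ℝ) ^ k * τ ^ 2 + (2 * (k : ℝ)) ^ (k + 1) = 0} =
        {2 * (k : ℝ) / ((k : ℝ) - 1), τ₂} := by
  have h2 : (2 : ℝ) ≤ k := by exact_mod_cast hk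
  have h0 : (0 : ℝ) < k := by linarith
  have h1 : (0 : ℝ) < (k : ℝ) - 1 := by linarith
  have hc : 0 < 2 * (k : ℝ) / ((k : ℝ) - 1) := by positivity
  have hD : (2 * (k : ℝ)) ^ (k + 1) / ((k : ℝ) - 1) ≠ 0 := by positivity
  have hle : 1 + 1 / (k : ℝ) ≤ 2 := by
    have : 1 / (k : ℝ) ≤ 1 := by
      rw [div_le_one h0]
      linarith
    linarith
  have hcont : Continuous (f k) := by
    unfold f
    fun_prop
  obtain ⟨s, hs, hfs⟩ := intermediate_value_Icc hle hcont.continuousOn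
    ⟨(f_neg k hk).le, f_two_nonneg k hk⟩
  have hs' : 1 + 1 / (k : ℝ) < s := by
    refine lt_of_le_of_ne hs.1 ?_
    rintro rfl
    exact (f_neg k hk).ne hfs
  have hs1 : 1 < s := lt_trans (lt_add_of_pos_right 1 (by positivity)) hs'
  have hf1 : f k 1 = 0 := by simp [f]
  refine ⟨2 * (k : ℝ) / ((k : ℝ) - 1) * s, ?_, ?_, ?_⟩
  · have e : 2 * ((k : ℝ) + 1) / ((k : ℝ) - 1) =
        2 * (k : ℝ) / ((k : ℝ) - 1) * (1 + 1 / (k : ℝ)) := by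
      field_simp
    rw [e]
    exact mul_lt_mul_of_pos_left hs' hc
  · exact (lt_mul_of_one_lt_right hc hs1).ne
  · ext τ
    simp only [Set.mem_ofPred_eq, Set.mem_insert_iff, Set.mem_singleton_iff]
    obtain ⟨t, rfl⟩ : ∃ t, τ = 2 * (k : ℝ) / ((k : ℝ) - 1) * t :=
      ⟨τ / (2 * (k : ℝ) / ((k : ℝ) - 1)), (mul_div_cancel₀ τ hc.ne').symm⟩
    rw [lhs_rescale k hk t, mul_eq_zero, or_iff_right hD, mul_pos_iff_of_pos_left hc,
      mul_right_inj' hc.ne', mul_eq_left₀ hc.ne']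
    constructor
    · rintro ⟨ht, hft⟩
      by_cases ht1 : t = 1
      · exact Or.inl ht1
      · exact Or.inr (root_unique k hk ht (by linarith) ht1 hs1.ne' hft hfs)
    · rintro (rfl | rfl)
      · exact ⟨one_pos, hf1⟩
      · exact ⟨by linarith, hfs⟩
end

section
/- Let k ≥ 2 be an integer, τ a real number, and a, b > 0. Define u : ℤ → ℝ by u_n = 1 if n is even, u_n = a if n ≡ 3 (mod 4), and u_n = b if n ≡ 1 (mod 4). Then u satisfies u_n^k · (u_{-1} + u_1 - τ) = u_{n-1} + u_{n+1} - τ·u_n for all n ∈ ℤ if and only if the pair (a,b) satisfies the system (a + b - τ)·b^k + τb - 2 = 0 and (a + b - τ)·a^k + τa - 2 = 0. -/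
/-!
The recurrence depends only on `n` modulo 4. At even sites both sides equal `a + b - τ`, so it
holds identically; at odd sites both neighbours carry the value `1`, and the classes `1` and `3`
modulo 4 give precisely the equations for `b` and for `a`.
-/

/-- the 4-periodic ansatz `u` (equal to `1` on even integers, `a` on integers
`≡ 3 (mod 4)`, `b` on integers `≡ 1 (mod 4)`) satisfies the boundary-law recurrence
`u_n^k (u_{-1} + u_1 - τ) = u_{n-1} + u_{n+1} - τ u_n` for all `n ∈ ℤ` iff `(a,b)` solves
the system `(a+b-τ)b^k + τb - 2 = 0`, `(a+b-τ)a^k + τa - 2 = 0`. -/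
theorem stmt11 (k : ℕ) (hk : 2 ≤ k) (τ a b : ℝ) (ha : 0 < a) (hb : 0 < b)
    (u : ℤ → ℝ)
    (hu_even : ∀ n : ℤ, n % 2 = 0 → u n = 1)
    (hu_three : ∀ n : ℤ, n % 4 = 3 → u n = a)
    (hu_one : ∀ n : ℤ, n % 4 = 1 → u n = b) :
    (∀ n : ℤ, u n ^ k * (u (-1) + u 1 - τ) = u (n - 1) + u (n + 1) - τ * u n) ↔
      ((a + b - τ) * b ^ k + τ * b - 2 = 0 ∧ (a + b - τ) * a ^ k + τ * a - 2 = 0) := by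
  rw [hu_three (-1) (by norm_num), hu_one 1 (by norm_num)]
  constructor
  · intro h
    have h1 := h 1
    have h3 := h 3
    rw [hu_one 1 (by norm_num), hu_even (1 - 1) (by norm_num),
      hu_even (1 + 1) (by norm_num)] at h1
    rw [hu_three 3 (by norm_num), hu_even (3 - 1) (by norm_num),
      hu_even (3 + 1) (by norm_num)] at h3
    exact ⟨by linarith, by linarith⟩
  · rintro ⟨h1, h3⟩ n
    have hn : n % 4 = 0 ∨ n % 4 = 1 ∨ n % 4 = 2 ∨ n % 4 = 3 := by omega
    rcases hn with hn | hn | hn | hn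
    · rw [hu_even n (by omega), hu_three (n - 1) (by omega), hu_one (n + 1) (by omega), one_pow]
      ring
    · rw [hu_one n hn, hu_even (n - 1) (by omega), hu_even (n + 1) (by omega)]
      linarith
    · rw [hu_even n (by omega), hu_one (n - 1) (by omega), hu_three (n + 1) (by omega), one_pow]
      ring
    · rw [hu_three n hn, hu_even (n - 1) (by omega), hu_even (n + 1) (by omega)]
      linarith
end

section
/- Let τ be a real number and let a, b > 0 with a ≠ b and a + b ≠ τ satisfy the system (a + b - τ)·a³ + τa - 2 = 0 and (a + b - τ)·b³ + τb - 2 = 0. Then x := a + b satisfies the quartic equation x⁴ - τx³ + τx + 2 = 0, and moreover ab = x² + τ/(x - τ). -/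
/-- if `a, b > 0`, `a ≠ b`, `a + b ≠ τ` solve the `k = 3` system, then
`x = a + b` satisfies `x⁴ - τx³ + τx + 2 = 0` and `ab = x² + τ/(x - τ)`. -/
theorem stmt13 (τ a b : ℝ) (ha : 0 < a) (hb : 0 < b) (hab : a ≠ b) (hs : a + b ≠ τ)
    (h1 : (a + b - τ) * a ^ 3 + τ * a - 2 = 0)
    (h2 : (a + b - τ) * b ^ 3 + τ * b - 2 = 0) :
    (a + b) ^ 4 - τ * (a + b) ^ 3 + τ * (a + b) + 2 = 0 ∧
      a * b = (a + b) ^ 2 + τ / (a + b - τ) := by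
  have hs' : a + b - τ ≠ 0 := sub_ne_zero.mpr hs
  -- Subtract the two equations and cancel `a - b`.
  have hD : (a + b - τ) * (a ^ 2 + a * b + b ^ 2) + τ = 0 := by
    apply mul_left_cancel₀ (sub_ne_zero.mpr hab)
    linear_combination h1 - h2
  constructor
  · -- The cubic `(a + b - τ) t³ + τ t - 2` has no `t²` term, so its third root is `-(a + b)`;
    -- the quartic says exactly that.
    linear_combination (2 * a + b) * hD - h1
  · field_simp
    linear_combination -hD
end

section
/- Let 0 < θ < 1 and let z : ℤ → [0,∞) be such that for every i ∈ ℤ the family (θ^{|i-j|} z_j)_{j∈ℤ} is summable; write w_i = ∑_{j∈ℤ} θ^{|i-j|} z_j. Then for every i ∈ ℤ: w_{i-1} + w_{i+1} - (θ + θ^{-1})·w_i = (θ - θ^{-1})·z_i. -/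
/-!
The kernel `m ↦ θ ^ |m|` is a multiple of the Green's function of the second-difference operator
`K ↦ K (m - 1) + K (m + 1) - (θ + θ⁻¹) K m`: away from `0` it is locally `θ ^ m` or `θ ^ (-m)`, both
of which are annihilated, and at `0` the value is `2 θ - (θ + θ⁻¹) = θ - θ⁻¹`
(`kernel_second_diff`). Summability allows the operator to be applied termwise to the series, and
only the term `j = i` survives.
-/

lemma kernel_second_diff {θ : ℝ} (hθ : θ ≠ 0) (m : ℤ) :
    θ ^ (m - 1).natAbs + θ ^ (m + 1).natAbs - (θ + θ⁻¹) * θ ^ m.natAbs =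
      if m = 0 then θ - θ⁻¹ else 0 := by
  rcases lt_trichotomy m 0 with h | rfl | h
  · obtain ⟨n, rfl⟩ : ∃ n : ℕ, m = -(n + 1 : ℤ) := ⟨(-m - 1).toNat, by omega⟩
    have h1 : (-(n + 1 : ℤ) - 1).natAbs = n + 2 := by omega
    have h2 : (-(n + 1 : ℤ) + 1).natAbs = n := by omega
    have h3 : (-(n + 1 : ℤ)).natAbs = n + 1 := by omega
    rw [h1, h2, h3, if_neg h.ne]
    field_simp
    ring
  · simp
  · obtain ⟨n, rfl⟩ : ∃ n : ℕ, m = (n + 1 : ℤ) := ⟨(m - 1).toNat, by omega⟩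
    have h1 : ((n + 1 : ℤ) - 1).natAbs = n := by omega
    have h2 : ((n + 1 : ℤ) + 1).natAbs = n + 2 := by omega
    have h3 : (n + 1 : ℤ).natAbs = n + 1 := by omega
    rw [h1, h2, h3, if_neg h.ne']
    field_simp
    ring

/-- for `0 < θ < 1` and nonnegative `z : ℤ → ℝ` with `(θ^{|i-j|} z_j)_j`
summable for every `i`, the sums `w_i = ∑_j θ^{|i-j|} z_j` satisfy
`w_{i-1} + w_{i+1} - (θ + θ⁻¹) w_i = (θ - θ⁻¹) z_i`. -/
theorem stmt15 (θ : ℝ) (hθ0 : 0 < θ) (hθ1 : θ < 1) (z : ℤ → ℝ) (hz : ∀ i, 0 ≤ z i)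
    (hsum : ∀ i : ℤ, Summable fun j : ℤ => θ ^ (i - j).natAbs * z j) (i : ℤ) :
    (∑' j : ℤ, θ ^ (i - 1 - j).natAbs * z j) + (∑' j : ℤ, θ ^ (i + 1 - j).natAbs * z j) -
        (θ + θ⁻¹) * ∑' j : ℤ, θ ^ (i - j).natAbs * z j = (θ - θ⁻¹) * z i := by
  rw [← tsum_mul_left, ← (hsum (i - 1)).tsum_add (hsum (i + 1)),
    ← ((hsum (i - 1)).add (hsum (i + 1))).tsum_sub ((hsum i).mul_left _)]
  have hterm (j : ℤ) : θ ^ (i - 1 - j).natAbs * z j + θ ^ (i + 1 - j).natAbs * z j -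
      (θ + θ⁻¹) * (θ ^ (i - j).natAbs * z j) = if j = i then (θ - θ⁻¹) * z i else 0 := by
    have hk := kernel_second_diff hθ0.ne' (i - j)
    rw [show i - j - 1 = i - 1 - j by ring, show i - j + 1 = i + 1 - j by ring] at hk
    split_ifs with hj
    · subst hj
      rw [if_pos (sub_self j)] at hk
      linear_combination z j * hk
    · rw [if_neg (sub_ne_zero.mpr (Ne.symm hj))] at hk
      linear_combination z j * hk
  simp_rw [hterm]
  exact tsum_ite_eq i _
end

section
/- Let h > 0 and τ > 2. Consider the cubic a³ + αa² + βa + γ = 0 with α = -τ/2, β = τ/(2h), γ = -1/h (equivalently 2ha³ - hτa² + τa - 2 = 0), and set p = β - α²/3, q = 2α³/27 - αβ/3 + γ, Δ = q²/4 + p³/27. Then: (1) if Δ > 0 the cubic has exactly one real root, and it is positive; (2) if Δ = 0 and q ≠ 0 it has exactly two distinct real roots, namely a₁ = -2·(q/2)^{1/3} + τ/6 and a₂ = (q/2)^{1/3} + τ/6 (a double root), both positive; (3) if Δ < 0 it has exactly three distinct real roots, all positive. -/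
/-!
The sign pattern `α < 0 < β`, `γ < 0` makes the cubic negative on `x ≤ 0`, so every real root is
positive. It is positive at `τ / 2`, since its value there is `(τ² - 4) / (4h)`, so a real
root `r` exists. Dividing by `x - r` leaves the quadratic `x² + bx + c` with `b = α + r` and
`c = β + r * b`, and the discriminant of the cubic factors as
`-108 Δ = (b² - 4c) (r² + br + c)²` (`discr_factor`). Hence the sign of `Δ` decides whether the
quadratic has no real root or two real roots other than `r`. If `Δ = 0`, then `s = (q/2)^{1/3}`
satisfies `p = -3s²` and `q = 2s³`, and `y³ + py + q = (y + 2s)(y - s)²` with `y = x - τ/6`.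
-/

/-- The real cube root. -/
noncomputable def cbrt (x : ℝ) : ℝ := if x < 0 then -((-x) ^ ((1 : ℝ) / 3)) else x ^ ((1 : ℝ) / 3)

lemma cbrt_pow_three (x : ℝ) : cbrt x ^ 3 = x := by
  have key : ∀ y : ℝ, 0 ≤ y → (y ^ ((1 : ℝ) / 3)) ^ 3 = y := by
    intro y hy
    rw [← Real.rpow_natCast, ← Real.rpow_mul hy]
    norm_num
  unfold cbrt
  split_ifs with hx
  · have := key (-x) (by linarith)
    linear_combination -this
  · exact key x (by linarith)

lemma root_pos {α β γ x : ℝ} (hα : α < 0) (hβ : 0 < β) (hγ : γ < 0)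
    (hx : x ^ 3 + α * x ^ 2 + β * x + γ = 0) : 0 < x := by
  by_contra! hneg
  have h1 : x ^ 3 ≤ 0 := Odd.pow_nonpos (by decide) hneg
  have h2 : α * x ^ 2 ≤ 0 := mul_nonpos_of_nonpos_of_nonneg hα.le (sq_nonneg x)
  have h3 : β * x ≤ 0 := mul_nonpos_of_nonneg_of_nonpos hβ.le hneg
  linarith

lemma cubic_factor {α β γ r : ℝ} (hr : r ^ 3 + α * r ^ 2 + β * r + γ = 0) (x : ℝ) :
    x ^ 3 + α * x ^ 2 + β * x + γ
      = (x - r) * (x ^ 2 + (α + r) * x + (β + r * (α + r))) := by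
  linear_combination hr

/-- The discriminant `-108 Δ` of the cubic is the discriminant of the quadratic cofactor of
`x - r` times the square of the value of that cofactor at `r`. -/
lemma discr_factor {α β γ r : ℝ} (hr : r ^ 3 + α * r ^ 2 + β * r + γ = 0) :
    -108 * ((2 * α ^ 3 / 27 - α * β / 3 + γ) ^ 2 / 4 + (β - α ^ 2 / 3) ^ 3 / 27)
      = ((α + r) ^ 2 - 4 * (β + r * (α + r)))
        * (r ^ 2 + (α + r) * r + (β + r * (α + r))) ^ 2 := by
  have hγ : γ = -(r ^ 3 + α * r ^ 2 + β * r) := by linarith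
  subst hγ
  ring

lemma cubic_unique_root {α β γ r : ℝ} (hr : r ^ 3 + α * r ^ 2 + β * r + γ = 0)
    (hΔ : 0 < (2 * α ^ 3 / 27 - α * β / 3 + γ) ^ 2 / 4 + (β - α ^ 2 / 3) ^ 3 / 27) :
    {x : ℝ | x ^ 3 + α * x ^ 2 + β * x + γ = 0} = {r} := by
  have hD : (α + r) ^ 2 - 4 * (β + r * (α + r)) < 0 := by
    by_contra! hD
    have := mul_nonneg hD (sq_nonneg (r ^ 2 + (α + r) * r + (β + r * (α + r))))
    linarith [discr_factor hr]
  ext x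
  simp only [Set.mem_ofPred_eq, Set.mem_singleton_iff]
  constructor
  · intro hx
    rw [cubic_factor hr x] at hx
    rcases mul_eq_zero.mp hx with h | h
    · linarith
    · nlinarith [sq_nonneg (2 * x + (α + r))]
  · rintro rfl
    exact hr

lemma cubic_three_roots {α β γ r : ℝ} (hr : r ^ 3 + α * r ^ 2 + β * r + γ = 0)
    (hΔ : (2 * α ^ 3 / 27 - α * β / 3 + γ) ^ 2 / 4 + (β - α ^ 2 / 3) ^ 3 / 27 < 0) :
    ∃ u v : ℝ, r ≠ u ∧ r ≠ v ∧ u ≠ v ∧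
      {x : ℝ | x ^ 3 + α * x ^ 2 + β * x + γ = 0} = {r, u, v} := by
  have hdis := discr_factor hr
  have hD : 0 < (α + r) ^ 2 - 4 * (β + r * (α + r)) := by
    by_contra! hD
    have := mul_nonpos_of_nonpos_of_nonneg hD
      (sq_nonneg (r ^ 2 + (α + r) * r + (β + r * (α + r))))
    linarith
  have hQ : r ^ 2 + (α + r) * r + (β + r * (α + r)) ≠ 0 := by
    intro h0
    rw [h0] at hdis
    linarith
  have hs := Real.sq_sqrt hD.le
  have hspos := Real.sqrt_pos.mpr hD
  set s := √((α + r) ^ 2 - 4 * (β + r * (α + r)))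
  have hfac : ∀ x : ℝ, x ^ 2 + (α + r) * x + (β + r * (α + r))
      = (x - (-(α + r) + s) / 2) * (x - (-(α + r) - s) / 2) := by
    intro x
    linear_combination (1 / 4 : ℝ) * hs
  rw [hfac r] at hQ
  refine ⟨(-(α + r) + s) / 2, (-(α + r) - s) / 2, sub_ne_zero.mp (left_ne_zero_of_mul hQ),
    sub_ne_zero.mp (right_ne_zero_of_mul hQ), fun h => by linarith, ?_⟩
  ext x
  simp only [Set.mem_ofPred_eq, Set.mem_insert_iff, Set.mem_singleton_iff]
  rw [cubic_factor hr x, hfac x, mul_eq_zero, mul_eq_zero, sub_eq_zero, sub_eq_zero, sub_eq_zero]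

/-- classification of the real roots of the cubic
`a³ + αa² + βa + γ = 0` (with `α = -τ/2`, `β = τ/(2h)`, `γ = -1/h`) according to the sign of
the discriminant `Δ = q²/4 + p³/27`: one real root (positive) if `Δ > 0`; exactly two
distinct real roots `a₁ = -2(q/2)^{1/3} + τ/6` and the double root `a₂ = (q/2)^{1/3} + τ/6`
(both positive) if `Δ = 0` and `q ≠ 0`; three distinct real roots, all positive, if `Δ < 0`. -/
theorem stmt19 (h τ : ℝ) (hh : 0 < h) (hτ : 2 < τ) :
    let α : ℝ := -τ / 2
    let β : ℝ := τ / (2 * h)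
    let γ : ℝ := -1 / h
    let p : ℝ := β - α ^ 2 / 3
    let q : ℝ := 2 * α ^ 3 / 27 - α * β / 3 + γ
    let Δ : ℝ := q ^ 2 / 4 + p ^ 3 / 27
    (0 < Δ → ∃ a : ℝ, 0 < a ∧ {x : ℝ | x ^ 3 + α * x ^ 2 + β * x + γ = 0} = {a}) ∧
    (Δ = 0 → q ≠ 0 →
      0 < -2 * cbrt (q / 2) + τ / 6 ∧
      0 < cbrt (q / 2) + τ / 6 ∧
      -2 * cbrt (q / 2) + τ / 6 ≠ cbrt (q / 2) + τ / 6 ∧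
      {x : ℝ | x ^ 3 + α * x ^ 2 + β * x + γ = 0} =
        {-2 * cbrt (q / 2) + τ / 6, cbrt (q / 2) + τ / 6} ∧
      ∀ x : ℝ, x ^ 3 + α * x ^ 2 + β * x + γ =
        (x - (-2 * cbrt (q / 2) + τ / 6)) * (x - (cbrt (q / 2) + τ / 6)) ^ 2) ∧
    (Δ < 0 → ∃ r₁ r₂ r₃ : ℝ, r₁ ≠ r₂ ∧ r₁ ≠ r₃ ∧ r₂ ≠ r₃ ∧ 0 < r₁ ∧ 0 < r₂ ∧ 0 < r₃ ∧
      {x : ℝ | x ^ 3 + α * x ^ 2 + β * x + γ = 0} = {r₁, r₂, r₃}) := by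
  intro α β γ p q Δ
  have hα : α < 0 := by simp only [α]; linarith
  have hβ : 0 < β := by simp only [β]; positivity
  have hγ : γ < 0 := by simp only [γ]; exact div_neg_of_neg_of_pos (by norm_num) hh
  obtain ⟨r, hr⟩ : ∃ r : ℝ, r ^ 3 + α * r ^ 2 + β * r + γ = 0 := by
    have hcont : ContinuousOn (fun x : ℝ => x ^ 3 + α * x ^ 2 + β * x + γ)
        (Set.Icc 0 (τ / 2)) := by fun_prop
    have hend : 0 ≤ (τ / 2) ^ 3 + α * (τ / 2) ^ 2 + β * (τ / 2) + γ := by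
      have e : (τ / 2) ^ 3 + α * (τ / 2) ^ 2 + β * (τ / 2) + γ = (τ ^ 2 - 4) / (4 * h) := by
        simp only [α, β, γ]
        field_simp
        ring
      rw [e]
      exact div_nonneg (by nlinarith) (by positivity)
    obtain ⟨r, -, hr⟩ := intermediate_value_Icc (by linarith : (0 : ℝ) ≤ τ / 2) hcont
      (show (0 : ℝ) ∈ Set.Icc _ _ from ⟨by simpa using hγ.le, hend⟩)
    exact ⟨r, hr⟩
  refine ⟨fun hΔ => ⟨r, root_pos hα hβ hγ hr, cubic_unique_root hr hΔ⟩, fun hΔ hq => ?_,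
    fun hΔ => ?_⟩
  · have hs : cbrt (q / 2) ^ 3 = q / 2 := cbrt_pow_three _
    set s := cbrt (q / 2)
    have hs0 : s ≠ 0 := by
      intro h0
      rw [h0] at hs
      apply hq
      linarith
    have hp : p = -3 * s ^ 2 := by
      have hodd : Odd 3 := by decide
      apply hodd.strictMono_pow.injective
      have h1 : q ^ 2 / 4 + p ^ 3 / 27 = 0 := hΔ
      have h2 : q = 2 * s ^ 3 := by linarith
      rw [h2] at h1
      change p ^ 3 = (-3 * s ^ 2) ^ 3
      linear_combination 27 * h1
    have hfac : ∀ x : ℝ, x ^ 3 + α * x ^ 2 + β * x + γ =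
        (x - (-2 * s + τ / 6)) * (x - (s + τ / 6)) ^ 2 := by
      intro x
      have hα_def : α = -τ / 2 := rfl
      -- The depressed form of the cubic, in the variable `x - τ / 6 = x + α / 3`.
      have hdep : x ^ 3 + α * x ^ 2 + β * x + γ = (x + α / 3) ^ 3 + p * (x + α / 3) + q := by
        simp only [p, q]
        ring
      rw [hdep, hp, show q = 2 * s ^ 3 by linarith, hα_def]
      ring
    refine ⟨root_pos hα hβ hγ (by rw [hfac]; ring), root_pos hα hβ hγ (by rw [hfac]; ring),
      fun h => hs0 (by linarith), ?_, hfac⟩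
    ext x
    simp only [Set.mem_ofPred_eq, Set.mem_insert_iff, Set.mem_singleton_iff]
    rw [hfac x, mul_eq_zero, pow_eq_zero_iff two_ne_zero, sub_eq_zero, sub_eq_zero]
  · obtain ⟨u, v, hu, hv, huv, hset⟩ := cubic_three_roots hr hΔ
    have hpos : ∀ x ∈ ({r, u, v} : Set ℝ), 0 < x := by
      rw [← hset]
      exact fun x hx => root_pos hα hβ hγ hx
    exact ⟨r, u, v, hu, hv, huv, hpos r (by simp), hpos u (by simp), hpos v (by simp), hset⟩
end
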